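/- Let n ≥ k ≥ 1 be integers with k ≤ (√(4n−3)+1)/2, and let h(n,k) be the least integer ≥ k such that every sequence in Z/nZ of length h(n,k) having at least k distinct terms contains a nonempty zero-sum subsequence. Then h(n,k) = n − (k² − k)/2. -/

import Mathlib

/-!
A sequence is zero-sum free if it has no nonempty zero-sum subsequence. Savchev and Chen showed that
a zero-sum free sequence of length greater than `|G| / 2` in a finite abelian group `G` has the form
`x₁ • b, …, xₗ • b` with positive integers `xᵢ` of total less than `|G|`. If it has at least `k`
distinct terms, so do the `xᵢ`, and their total is at least `l + (0 + 1 + ⋯ + (k - 1))`. Thus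
`l + k.choose 2 < |G|`. Conversely, for `l + k.choose 2 < n` the residues modulo `n` of
`1, 2, …, k, 1, …, 1` form a zero-sum free sequence of length `l`.

For the structure theorem, grow a subsequence `U` of `S` with at least `2 * |U|` subset sums by
adding terms that each create two new sums. As `2 * |S| > |G|`, this gets stuck before all of `S` is
used. Then each remaining term adds only one sum, so translation by it maps the subset sums of `U`
other than the total onto the nonzero ones. Only one `b` can do this, and it still does after the
remaining terms, which are now copies of `b`, are adjoined. The terms of `S` different from `b` are
then absorbed one by one into a family of multiples of `b` whose coefficients have all of
`0, 1, …, ∑ xᵢ` as subset sums. A term that could not be absorbed would double the number of subset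
sums, so that the growth procedure could be restarted without any copy of `b` left over,
contradicting the uniqueness of `b`.
-/

section Subsums

variable {M N : Type*} [AddCommMonoid M] [DecidableEq M] [AddCommMonoid N] [DecidableEq N]

/-- The set of sums of all subsequences of a finite sequence, the empty one included. Sequences are
considered up to order, hence as multisets. -/
def subsums (S : Multiset M) : Finset M := (S.powerset.map Multiset.sum).toFinset

theorem mem_subsums {S : Multiset M} {x : M} : x ∈ subsums S ↔ ∃ T ≤ S, T.sum = x := by
  simp [subsums]

theorem zero_mem_subsums (S : Multiset M) : 0 ∈ subsums S :=
  mem_subsums.2 ⟨0, zero_le, Multiset.sum_zero⟩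

theorem sum_mem_subsums (S : Multiset M) : S.sum ∈ subsums S :=
  mem_subsums.2 ⟨S, le_rfl, rfl⟩

theorem subsums_cons (a : M) (S : Multiset M) :
    subsums (a ::ₘ S) = subsums S ∪ (subsums S).image (a + ·) := by
  ext x
  simp [subsums, Multiset.powerset_cons]

theorem mem_subsums_cons {a x : M} {S : Multiset M} :
    x ∈ subsums (a ::ₘ S) ↔ x ∈ subsums S ∨ ∃ y ∈ subsums S, a + y = x := by
  rw [subsums_cons, Finset.mem_union, Finset.mem_image]

theorem two_le_card_subsums {S : Multiset M} (hS : S.sum ≠ 0) : 2 ≤ (subsums S).card :=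
  Finset.one_lt_card.2 ⟨S.sum, sum_mem_subsums S, 0, zero_mem_subsums S, hS⟩

theorem exists_map_eq_of_le_map {α β : Type*} {f : α → β} {S : Multiset α} {T : Multiset β}
    (h : T ≤ S.map f) : ∃ V ≤ S, V.map f = T := by
  induction S, T using Quotient.inductionOn₂ with
  | h s t =>
    obtain ⟨u, hut, hus⟩ : t.Subperm (s.map f) := Multiset.coe_le.1 h
    obtain ⟨v, hvs, rfl⟩ := List.sublist_map_iff.1 hus
    exact ⟨v, Multiset.coe_le.2 hvs.subperm, Multiset.coe_eq_coe.2 hut⟩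

theorem subsums_map (f : M →+ N) (S : Multiset M) :
    subsums (S.map f) = (subsums S).image f := by
  ext x
  simp only [mem_subsums, Finset.mem_image]
  constructor
  · rintro ⟨T, hT, rfl⟩
    obtain ⟨V, hV, rfl⟩ := exists_map_eq_of_le_map hT
    exact ⟨V.sum, ⟨V, hV, rfl⟩, map_multiset_sum f V⟩
  · rintro ⟨_, ⟨V, hV, rfl⟩, rfl⟩
    exact ⟨V.map f, Multiset.map_le_map hV, (map_multiset_sum f V).symm⟩

end Subsums

section ZeroSumFree

variable {M N : Type*} [AddCommMonoid M] [AddCommMonoid N]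

/-- A sequence, taken as a multiset, is zero-sum free if none of its nonempty subsequences has sum
zero. -/
def ZeroSumFree (S : Multiset M) : Prop := ∀ T ≤ S, T ≠ 0 → T.sum ≠ 0

theorem zeroSumFree_coe {l : List M} :
    ZeroSumFree (l : Multiset M) ↔ ∀ t : List M, t.Sublist l → t ≠ [] → t.sum ≠ 0 := by
  constructor
  · intro h t ht ht0
    simpa using h t (Multiset.coe_le.2 ht.subperm) (by simpa using ht0)
  · intro h T hT hT0
    induction T using Quotient.inductionOn with
    | h t =>
      obtain ⟨u, hut, hul⟩ : t.Subperm l := Multiset.coe_le.1 hT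
      have hu0 : u ≠ [] := by
        rintro rfl
        exact hT0 (Multiset.coe_eq_coe.2 hut.symm)
      simpa [hut.sum_eq] using h u hul hu0

namespace ZeroSumFree

variable {S T : Multiset M} {c x : M}

theorem mono (h : ZeroSumFree S) (hT : T ≤ S) : ZeroSumFree T :=
  fun V hV => h V (hV.trans hT)

theorem zero_notMem (h : ZeroSumFree S) : 0 ∉ S := fun h0 =>
  h {0} (Multiset.singleton_le.2 h0) (Multiset.singleton_ne_zero 0) (Multiset.sum_singleton 0)

theorem add_ne_zero [DecidableEq M] (h : ZeroSumFree (c ::ₘ S)) (hx : x ∈ subsums S) :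
    c + x ≠ 0 := by
  obtain ⟨T, hT, rfl⟩ := mem_subsums.1 hx
  simpa using h (c ::ₘ T) (Multiset.cons_le_cons c hT) Multiset.cons_ne_zero

theorem map_ne_zero [DecidableEq M] {f : M →+ N} (h : ZeroSumFree (S.map f))
    (hx : x ∈ subsums S) (hx0 : x ≠ 0) : f x ≠ 0 := by
  obtain ⟨T, hT, rfl⟩ := mem_subsums.1 hx
  have hT0 : T.map f ≠ 0 := by
    rw [Ne, Multiset.map_eq_zero]
    rintro rfl
    exact hx0 Multiset.sum_zero
  rw [map_multiset_sum]
  exact h _ (Multiset.map_le_map hT) hT0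

theorem pos_of_map_smul {xs : Multiset ℕ} (h : ZeroSumFree (xs.map (· • c))) :
    ∀ i ∈ xs, 0 < i := by
  intro i hi
  rw [Nat.pos_iff_ne_zero]
  rintro rfl
  exact h.zero_notMem (Multiset.mem_map.2 ⟨0, hi, zero_smul ℕ c⟩)

end ZeroSumFree

end ZeroSumFree

section SubsumStep

variable {M : Type*} [AddCancelCommMonoid M] [DecidableEq M] {S : Multiset M} {b c : M}

theorem ZeroSumFree.add_sum_notMem (h : ZeroSumFree (c ::ₘ S)) : c + S.sum ∉ subsums S := by
  intro hmem
  obtain ⟨T, hT, hsum⟩ := mem_subsums.1 hmem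
  obtain ⟨R, rfl⟩ := Multiset.le_iff_exists_add.1 hT
  have hR : R.sum ∈ subsums (T + R) := mem_subsums.2 ⟨R, Multiset.le_add_left _ _, rfl⟩
  apply h.add_ne_zero hR
  rwa [Multiset.sum_add, add_left_comm, left_eq_add] at hsum

/-- Translation by `b` maps the subset sums of `S` other than the total onto the nonzero ones. In a
finite group and for `S.sum ≠ 0`, this says that the subset sums form an arithmetic progression of
difference `b` from `0` to `S.sum`, possibly together with some cosets of the subgroup generated by
`b`. -/
def IsSubsumStep (S : Multiset M) (b : M) : Prop :=
  ∀ x, (x ∈ subsums S ∧ x ≠ S.sum) ↔ (b + x ∈ subsums S ∧ b + x ≠ 0)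

theorem subsums_cons_eq_insert (h : ZeroSumFree (c ::ₘ S))
    (hcard : (subsums (c ::ₘ S)).card ≤ (subsums S).card + 1) :
    subsums (c ::ₘ S) = insert (c + S.sum) (subsums S) := by
  refine (Finset.eq_of_subset_of_card_le (Finset.insert_subset ?_ ?_) ?_).symm
  · exact mem_subsums_cons.2 (Or.inr ⟨_, sum_mem_subsums S, rfl⟩)
  · exact fun x hx => mem_subsums_cons.2 (Or.inl hx)
  · rwa [Finset.card_insert_of_notMem h.add_sum_notMem]

theorem isSubsumStep_of_card_le (h : ZeroSumFree (c ::ₘ S))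
    (hcard : (subsums (c ::ₘ S)).card ≤ (subsums S).card + 1) : IsSubsumStep S c := by
  have image_eq : ((subsums S).erase S.sum).image (c + ·) = (subsums S).erase 0 := by
    apply Finset.eq_of_subset_of_card_le
    · intro x hx
      obtain ⟨y, hy, rfl⟩ := Finset.mem_image.1 hx
      obtain ⟨hy_ne, hy_mem⟩ := Finset.mem_erase.1 hy
      have hmem : c + y ∈ subsums (c ::ₘ S) := mem_subsums_cons.2 (Or.inr ⟨y, hy_mem, rfl⟩)
      rw [subsums_cons_eq_insert h hcard, Finset.mem_insert, add_right_inj] at hmem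
      exact Finset.mem_erase.2 ⟨h.add_ne_zero hy_mem, hmem.resolve_left hy_ne⟩
    · rw [Finset.card_image_of_injective _ (add_right_injective c),
        Finset.card_erase_of_mem (sum_mem_subsums S), Finset.card_erase_of_mem (zero_mem_subsums S)]
  intro x
  have mem_iff := Finset.ext_iff.1 image_eq (c + x)
  simp only [Finset.mem_image, Finset.mem_erase, add_right_inj, exists_eq_right] at mem_iff
  rw [and_comm, mem_iff, and_comm]

namespace IsSubsumStep

theorem cons (hb : IsSubsumStep S b) (h : ZeroSumFree (b ::ₘ S)) : IsSubsumStep (b ::ₘ S) b := by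
  have mem_iff (x : M) : x ∈ subsums (b ::ₘ S) ∧ x ≠ (b ::ₘ S).sum ↔ x ∈ subsums S := by
    rw [Multiset.sum_cons, mem_subsums_cons]
    constructor
    · rintro ⟨hx | ⟨y, hy, rfl⟩, hne⟩
      · exact hx
      · exact ((hb y).1 ⟨hy, fun hys => hne (congrArg (b + ·) hys)⟩).1
    · intro hx
      exact ⟨Or.inl hx, fun hxs => h.add_sum_notMem (hxs ▸ hx)⟩
  intro x
  rw [mem_iff, mem_subsums_cons]
  constructor
  · intro hx
    exact ⟨Or.inr ⟨x, hx, rfl⟩, h.add_ne_zero hx⟩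
  · rintro ⟨hbx | ⟨y, hy, hyx⟩, hne⟩
    · exact ((hb x).2 ⟨hbx, hne⟩).1
    · rwa [← add_left_cancel hyx]

theorem add_replicate (hb : IsSubsumStep S b) (r : ℕ)
    (h : ZeroSumFree (S + Multiset.replicate r b)) :
    IsSubsumStep (S + Multiset.replicate r b) b := by
  induction r with
  | zero => simpa using hb
  | succ r ih =>
    rw [Multiset.replicate_succ, Multiset.add_cons] at h ⊢
    exact (ih (h.mono (Multiset.le_cons_self _ _))).cons h

end IsSubsumStep

end SubsumStep

section Behaving

/-- A behaving sequence of natural numbers in the sense of Savchev and Chen, except that zero terms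
are allowed: every number up to the total is the sum of a subsequence. -/
def IsBehaving (xs : Multiset ℕ) : Prop := ∀ i ≤ xs.sum, i ∈ subsums xs

theorem isBehaving_replicate_one (r : ℕ) : IsBehaving (Multiset.replicate r 1) := by
  intro i hi
  refine mem_subsums.2 ⟨Multiset.replicate i 1, ?_, by simp⟩
  rw [Multiset.replicate_le_replicate]
  simpa using hi

namespace IsBehaving

variable {xs : Multiset ℕ}

theorem cons (h : IsBehaving xs) {x : ℕ} (hx : x ≤ xs.sum) : IsBehaving (x ::ₘ xs) := by
  intro i hi
  rw [Multiset.sum_cons] at hi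
  rw [mem_subsums_cons]
  rcases le_or_gt i xs.sum with hle | hlt
  · exact Or.inl (h i hle)
  · exact Or.inr ⟨i - x, h _ (by omega), by omega⟩

theorem subsums_eq (h : IsBehaving xs) : subsums xs = Finset.Iic xs.sum := by
  ext i
  rw [Finset.mem_Iic]
  refine ⟨fun hi => ?_, h i⟩
  obtain ⟨V, hV, rfl⟩ := mem_subsums.1 hi
  obtain ⟨W, rfl⟩ := Multiset.le_iff_exists_add.1 hV
  rw [Multiset.sum_add]
  exact Nat.le_add_right _ _

theorem mem_subsums_map_smul {M : Type*} [AddCommMonoid M] [DecidableEq M] (h : IsBehaving xs)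
    {b y : M} : y ∈ subsums (xs.map (· • b)) ↔ ∃ i ≤ xs.sum, i • b = y := by
  have hmap := subsums_map (multiplesHom M b) xs
  rw [h.subsums_eq] at hmap
  have hy := Finset.ext_iff.1 hmap y
  simp only [Finset.mem_image, Finset.mem_Iic] at hy
  exact hy

variable {M : Type*} [AddCancelCommMonoid M] {b c : M}

theorem injOn_smul (h : IsBehaving xs) (hz : ZeroSumFree (xs.map (· • b))) :
    Set.InjOn (· • b) (Set.Iic xs.sum) := by
  intro i hi j hj hij
  wlog hle : i ≤ j generalizing i j
  · exact (this hj hi hij.symm (le_of_not_ge hle)).symm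
  obtain ⟨d, rfl⟩ := Nat.exists_eq_add_of_le hle
  have hd : d • b = 0 := by simpa [add_smul] using hij
  by_contra hne
  have hmem : d ∈ subsums xs := h d ((Nat.le_add_left d i).trans hj)
  exact hz.map_ne_zero (f := multiplesHom M b) hmem (by omega) hd

variable [DecidableEq M]

theorem card_subsums_map_smul (h : IsBehaving xs) (hz : ZeroSumFree (xs.map (· • b))) :
    (subsums (xs.map (· • b))).card = xs.sum + 1 := by
  have hsub : subsums (xs.map (· • b)) = (Finset.Iic xs.sum).image (· • b) := by
    ext y
    simp [h.mem_subsums_map_smul]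
  rw [hsub, Finset.card_image_of_injOn (by simpa using h.injOn_smul hz), Nat.card_Iic]

theorem card_subsums_cons_map_smul (h : IsBehaving xs)
    (hz : ZeroSumFree (c ::ₘ xs.map (· • b))) (hc : ∀ i ≤ xs.sum, i • b ≠ c) :
    (subsums (c ::ₘ xs.map (· • b))).card = 2 * (xs.sum + 1) := by
  have hdisj : Disjoint (subsums (xs.map (· • b)))
      ((subsums (xs.map (· • b))).image (c + ·)) := by
    simp only [Finset.disjoint_left, Finset.mem_image, h.mem_subsums_map_smul]
    rintro _ ⟨j, hj, rfl⟩ ⟨_, ⟨i, hi, rfl⟩, hij⟩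
    rcases le_total i j with hle | hle
    · obtain ⟨d, rfl⟩ := Nat.exists_eq_add_of_le' hle
      rw [add_smul] at hij
      exact hc d (by omega) (add_right_cancel hij).symm
    · obtain ⟨d, rfl⟩ := Nat.exists_eq_add_of_le' hle
      rw [add_smul, ← add_assoc, add_eq_right] at hij
      exact hz.add_ne_zero (h.mem_subsums_map_smul.2 ⟨d, by omega, rfl⟩) hij
  rw [subsums_cons, Finset.card_union_of_disjoint hdisj,
    Finset.card_image_of_injective _ (add_right_injective c),
    h.card_subsums_map_smul (hz.mono (Multiset.le_cons_self _ _)), two_mul]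

end IsBehaving

end Behaving

section SavchevChen

variable {G : Type*} [AddCommGroup G] [DecidableEq G] {S : Multiset G} {b c : G}

theorem IsSubsumStep.unique (hS : S.sum ≠ 0) (hb : IsSubsumStep S b) (hc : IsSubsumStep S c) :
    b = c := by
  by_contra hne
  have hc_mem := (hc 0).1 ⟨zero_mem_subsums S, hS.symm⟩
  have hsub_mem := (hb (c - b)).2 (by simpa using hc_mem)
  have hneg_mem := (hc (-b)).2
    (by simpa [← sub_eq_add_neg, sub_eq_zero, Ne.symm hne] using hsub_mem.1)
  exact ((hb (-b)).1 hneg_mem).2 (add_neg_cancel b)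

theorem exists_isSubsumStep_add_of_forall {U R : Multiset G}
    (hz : ZeroSumFree (U + R)) (hU : U ≠ 0) (hR : R ≠ 0) (hstep : ∀ c ∈ R, IsSubsumStep U c) :
    ∃ b ∈ R, IsSubsumStep (U + R) b := by
  obtain ⟨b, hb⟩ := Multiset.exists_mem_of_ne_zero hR
  have hsum : U.sum ≠ 0 := hz U (Multiset.le_add_right _ _) hU
  have hR_eq : R = Multiset.replicate R.card b :=
    Multiset.eq_replicate_card.2 fun c hc => (hstep c hc).unique hsum (hstep b hb)
  refine ⟨b, hb, ?_⟩
  rw [hR_eq] at hz ⊢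
  exact (hstep b hb).add_replicate _ hz

variable [Fintype G]

theorem exists_isSubsumStep_add {U R : Multiset G} (hz : ZeroSumFree (U + R)) (hU : U ≠ 0)
    (hUcard : 2 * U.card ≤ (subsums U).card) (hcard : Fintype.card G < 2 * (U + R).card) :
    ∃ b ∈ R, IsSubsumStep (U + R) b := by
  induction R using Multiset.strongInductionOn generalizing U with
  | ih R ih =>
    by_cases hgrow : ∃ c ∈ R, (subsums U).card + 2 ≤ (subsums (c ::ₘ U)).card
    · obtain ⟨c, hc, hcU⟩ := hgrow
      obtain ⟨R, rfl⟩ := Multiset.exists_cons_of_mem hc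
      rw [Multiset.add_cons, ← Multiset.cons_add] at hz hcard ⊢
      obtain ⟨b, hb, hstep⟩ := ih R (Multiset.lt_cons_self R c) hz Multiset.cons_ne_zero
        (by rw [Multiset.card_cons]; omega) hcard
      exact ⟨b, Multiset.mem_cons_of_mem hb, hstep⟩
    · push Not at hgrow
      have hR : R ≠ 0 := by
        rintro rfl
        have := Finset.card_le_univ (subsums U)
        rw [add_zero] at hcard
        omega
      refine exists_isSubsumStep_add_of_forall hz hU hR fun c hc => ?_
      have hle : c ::ₘ U ≤ U + R := by
        rw [← Multiset.singleton_add, add_comm]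
        gcongr
        exact Multiset.singleton_le.2 hc
      exact isSubsumStep_of_card_le (hz.mono hle) (Nat.le_of_lt_succ (hgrow c hc))

theorem ZeroSumFree.exists_isSubsumStep (hz : ZeroSumFree S)
    (hcard : Fintype.card G < 2 * S.card) : ∃ b, IsSubsumStep S b := by
  obtain ⟨a, ha⟩ := Multiset.card_pos_iff_exists_mem.1 (by omega : 0 < S.card)
  obtain ⟨R, rfl⟩ := Multiset.exists_cons_of_mem ha
  have ha0 : a ≠ 0 := fun h0 => hz.zero_notMem (h0 ▸ ha)
  rw [← Multiset.singleton_add] at hz hcard ⊢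
  obtain ⟨b, -, hb⟩ := exists_isSubsumStep_add hz (Multiset.singleton_ne_zero a)
    (two_le_card_subsums (by simpa using ha0)) hcard
  exact ⟨b, hb⟩

theorem exists_smul_eq_of_isSubsumStep {xs : Multiset ℕ} {R : Multiset G}
    (hz : ZeroSumFree (c ::ₘ xs.map (· • b) + R))
    (hcard : Fintype.card G < 2 * (c ::ₘ xs.map (· • b) + R).card)
    (hb : IsSubsumStep (c ::ₘ xs.map (· • b) + R) b) (hbR : b ∉ R) (hxs : IsBehaving xs) :
    ∃ i ≤ xs.sum, i • b = c := by
  by_contra! hc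
  have hzc : ZeroSumFree (c ::ₘ xs.map (· • b)) := hz.mono (Multiset.le_add_right _ _)
  have hpos := (hzc.mono (Multiset.le_cons_self _ _)).pos_of_map_smul
  have hle : xs.card ≤ xs.sum := by simpa using Multiset.card_nsmul_le_sum hpos
  have hgrow : 2 * (c ::ₘ xs.map (· • b)).card ≤ (subsums (c ::ₘ xs.map (· • b))).card := by
    rw [hxs.card_subsums_cons_map_smul hzc hc, Multiset.card_cons, Multiset.card_map]
    omega
  obtain ⟨b', hb'R, hb'⟩ := exists_isSubsumStep_add hz Multiset.cons_ne_zero hgrow hcard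
  have hsum := hz _ le_rfl (by rw [Multiset.cons_add]; exact Multiset.cons_ne_zero)
  exact hbR (hb.unique hsum hb' ▸ hb'R)

theorem exists_isBehaving_map_smul_eq {xs : Multiset ℕ} {R : Multiset G}
    (hz : ZeroSumFree (xs.map (· • b) + R))
    (hcard : Fintype.card G < 2 * (xs.map (· • b) + R).card)
    (hb : IsSubsumStep (xs.map (· • b) + R) b) (hbR : b ∉ R) (hxs : IsBehaving xs) :
    ∃ ys, IsBehaving ys ∧ ys.map (· • b) = xs.map (· • b) + R := by
  induction R using Multiset.induction_on generalizing xs with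
  | empty => exact ⟨xs, hxs, (add_zero _).symm⟩
  | cons c R ih =>
    rw [Multiset.add_cons, ← Multiset.cons_add] at hz hcard hb ⊢
    have hbR' : b ∉ R := fun h => hbR (Multiset.mem_cons_of_mem h)
    obtain ⟨i, hi, rfl⟩ := exists_smul_eq_of_isSubsumStep hz hcard hb hbR' hxs
    rw [← Multiset.map_cons (· • b)] at hz hcard hb ⊢
    exact ih hz hcard hb hbR' (hxs.cons hi)

end SavchevChen

theorem savchev_chen {G : Type*} [AddCommGroup G] [Fintype G] {S : Multiset G}
    (hz : ZeroSumFree S) (hcard : Fintype.card G < 2 * S.card) :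
    ∃ (b : G) (xs : Multiset ℕ),
      xs.map (· • b) = S ∧ (∀ x ∈ xs, 0 < x) ∧ xs.sum < Fintype.card G := by
  classical
  obtain ⟨b, hb⟩ := hz.exists_isSubsumStep hcard
  have hsplit : (Multiset.replicate (S.count b) 1).map (· • b) + S.filter (¬ · = b) = S := by
    rw [Multiset.map_replicate, one_smul, ← Multiset.filter_eq']
    exact Multiset.filter_add_not _ _
  obtain ⟨xs, hxs, hxsS⟩ := exists_isBehaving_map_smul_eq (by rwa [hsplit]) (by rwa [hsplit])
    (by rwa [hsplit]) (by simp) (isBehaving_replicate_one (S.count b))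
  obtain rfl : xs.map (· • b) = S := hxsS.trans hsplit
  refine ⟨b, xs, rfl, hz.pos_of_map_smul, ?_⟩
  rw [← Nat.succ_le_iff, Nat.succ_eq_add_one, ← hxs.card_subsums_map_smul hz]
  exact Finset.card_le_univ _

section DistinctTerms

theorem card_choose_two_le_sum (s : Finset ℕ) : s.card.choose 2 ≤ ∑ x ∈ s, x := by
  induction s using Finset.induction_on_max with
  | empty => simp
  | insert a s hmax ih =>
    have ha : a ∉ s := fun h => lt_irrefl a (hmax a h)
    have hcard : s.card ≤ a := by
      simpa using Finset.card_le_card fun x hx => Finset.mem_range.2 (hmax x hx)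
    rw [Finset.card_insert_of_notMem ha, Finset.sum_insert ha, Nat.choose_succ_succ' s.card 1,
      Nat.choose_one_right]
    exact add_le_add hcard ih

theorem toFinset_card_choose_two_le_sum (xs : Multiset ℕ) :
    xs.toFinset.card.choose 2 ≤ xs.sum := by
  obtain ⟨R, hR⟩ := Multiset.le_iff_exists_add.1 (Multiset.dedup_le xs)
  calc xs.toFinset.card.choose 2
      ≤ ∑ x ∈ xs.toFinset, x := card_choose_two_le_sum _
    _ = xs.dedup.sum := by simp [Finset.sum_eq_multiset_sum]
    _ ≤ xs.dedup.sum + R.sum := Nat.le_add_right _ _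
    _ = xs.sum := by rw [← Multiset.sum_add, ← hR]

theorem card_add_choose_two_le_sum {xs : Multiset ℕ} (hpos : ∀ x ∈ xs, 0 < x) :
    xs.card + xs.toFinset.card.choose 2 ≤ xs.sum := by
  obtain ⟨ys, rfl⟩ : ∃ ys : Multiset ℕ, ys.map (· + 1) = xs := by
    refine ⟨xs.map (· - 1), ?_⟩
    rw [Multiset.map_map]
    exact (Multiset.map_congr rfl fun x hx => Nat.succ_pred_eq_of_pos (hpos x hx)).trans
      (Multiset.map_id xs)
  have hle : (ys.map (· + 1)).toFinset.card ≤ ys.toFinset.card := by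
    rw [Multiset.toFinset_map]
    exact Finset.card_image_le
  have hchoose := (Nat.choose_le_choose 2 hle).trans (toFinset_card_choose_two_le_sum ys)
  have hsum : (ys.map (· + 1)).sum = ys.sum + ys.card := by simp [Multiset.sum_map_add]
  rw [hsum, Multiset.card_map]
  omega

theorem ZeroSumFree.card_add_choose_two_lt {G : Type*} [AddCommGroup G] [DecidableEq G]
    [Fintype G] {S : Multiset G} (hz : ZeroSumFree S) (hcard : Fintype.card G < 2 * S.card) :
    S.card + S.toFinset.card.choose 2 < Fintype.card G := by
  obtain ⟨b, xs, rfl, hpos, hsum⟩ := savchev_chen hz hcard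
  have hle : (xs.map (· • b)).toFinset.card ≤ xs.toFinset.card := by
    rw [Multiset.toFinset_map]
    exact Finset.card_image_le
  calc (xs.map (· • b)).card + (xs.map (· • b)).toFinset.card.choose 2
      ≤ xs.card + xs.toFinset.card.choose 2 := by
        rw [Multiset.card_map]
        gcongr
    _ ≤ xs.sum := card_add_choose_two_le_sum hpos
    _ < Fintype.card G := hsum

end DistinctTerms

section Extremal

theorem zeroSumFree_map_natCast {n : ℕ} {xs : Multiset ℕ} (hpos : ∀ x ∈ xs, 0 < x)
    (hsum : xs.sum < n) : ZeroSumFree (xs.map (Nat.cast : ℕ → ZMod n)) := by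
  intro T hT hT0 hTsum
  obtain ⟨V, hV, rfl⟩ := exists_map_eq_of_le_map hT
  have hVsum : V.sum = 0 := by
    obtain ⟨W, rfl⟩ := Multiset.le_iff_exists_add.1 hV
    rw [Multiset.sum_add] at hsum
    rw [← Nat.cast_multiset_sum, ZMod.natCast_eq_zero_iff] at hTsum
    exact Nat.eq_zero_of_dvd_of_lt hTsum (by omega)
  refine hT0 (Multiset.map_eq_zero.2 (Multiset.eq_zero_of_forall_notMem fun x hx => ?_))
  exact (hpos x (Multiset.mem_of_le hV hx)).ne' (Multiset.sum_eq_zero_iff.1 hVsum x hx)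

theorem toFinset_card_map_natCast {n : ℕ} {xs : Multiset ℕ} (hlt : ∀ x ∈ xs, x < n) :
    (xs.map (Nat.cast : ℕ → ZMod n)).toFinset.card = xs.toFinset.card := by
  rw [Multiset.toFinset_map]
  refine Finset.card_image_of_injOn fun x hx y hy hxy => ?_
  rw [Finset.mem_coe, Multiset.mem_toFinset] at hx hy
  exact Nat.ModEq.eq_of_lt_of_lt ((ZMod.natCast_eq_natCast_iff x y n).1 hxy) (hlt x hx) (hlt y hy)

theorem exists_multiset_sum_eq_add_choose_two {k m : ℕ} (hkm : k ≤ m) :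
    ∃ xs : Multiset ℕ, xs.card = m ∧ k ≤ xs.toFinset.card ∧ (∀ x ∈ xs, 0 < x) ∧
      xs.sum = m + k.choose 2 := by
  refine ⟨(Multiset.range k).map (· + 1) + Multiset.replicate (m - k) 1, ?_, ?_, ?_, ?_⟩
  · simp [hkm]
  · calc k = ((Finset.range k).image (· + 1)).card := by
          rw [Finset.card_image_of_injective _ (add_left_injective 1), Finset.card_range]
      _ ≤ _ := Finset.card_le_card fun x hx => by
          rw [Multiset.mem_toFinset, Multiset.mem_add]
          exact Or.inl (by simpa using hx)
  · intro x hx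
    rcases Multiset.mem_add.1 hx with hx | hx
    · obtain ⟨i, -, rfl⟩ := Multiset.mem_map.1 hx
      exact i.succ_pos
    · exact (Multiset.eq_of_mem_replicate hx).symm ▸ one_pos
  · have hrange : (Multiset.range k).sum = k.choose 2 := by
      rw [Nat.choose_two_right, ← Finset.sum_range_id]
      simp [Finset.sum_eq_multiset_sum]
    rw [Multiset.sum_add, Multiset.sum_map_add, Multiset.map_id', hrange, Multiset.map_const',
      Multiset.sum_replicate, Multiset.sum_replicate, Multiset.card_range, smul_eq_mul, smul_eq_mul]
    omega

theorem exists_zeroSumFree_zmod {n k m : ℕ} (hkm : k ≤ m) (hn : m + k.choose 2 < n) :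
    ∃ S : Multiset (ZMod n), S.card = m ∧ k ≤ S.toFinset.card ∧ ZeroSumFree S := by
  obtain ⟨xs, rfl, hk, hpos, hsum⟩ := exists_multiset_sum_eq_add_choose_two hkm
  have hlt : xs.sum < n := hsum ▸ hn
  refine ⟨xs.map Nat.cast, Multiset.card_map _ _, ?_, zeroSumFree_map_natCast hpos hlt⟩
  rwa [toFinset_card_map_natCast fun x hx => (Multiset.le_sum_of_mem hx).trans_lt hlt]

end Extremal

theorem le_choose_two_add_one (k : ℕ) : k ≤ k.choose 2 + 1 := by
  cases k with
  | zero => exact Nat.zero_le _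
  | succ k =>
    rw [Nat.choose_succ_succ' k 1, Nat.choose_one_right]
    omega

theorem two_mul_choose_two_lt_of_le_sqrt {n k : ℕ} (hk1 : 1 ≤ k)
    (hk : (k : ℝ) ≤ (√(4 * (n : ℝ) - 3) + 1) / 2) : 2 * k.choose 2 < n := by
  have hk1' : (1 : ℝ) ≤ k := by exact_mod_cast hk1
  have hsq : (2 * (k : ℝ) - 1) ^ 2 ≤ 4 * n - 3 :=
    (Real.le_sqrt' (by linarith)).1 (by linarith)
  have hreal : 2 * (k.choose 2 : ℝ) < n := by
    rw [Nat.cast_choose_two]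
    linarith
  exact_mod_cast hreal

theorem stmt18 (n k : ℕ) (hk1 : 1 ≤ k) (hkn : k ≤ n)
    (hk : (k : ℝ) ≤ (Real.sqrt (4 * (n : ℝ) - 3) + 1) / 2) :
    IsLeast {m : ℕ | k ≤ m ∧
      ∀ α : List (ZMod n), α.length = m → k ≤ α.toFinset.card →
        ∃ t : List (ZMod n), t.Sublist α ∧ t ≠ [] ∧ t.sum = 0}
      (n - (k ^ 2 - k) / 2) := by
  have hchoose : (k ^ 2 - k) / 2 = k.choose 2 := by
    rw [Nat.choose_two_right, Nat.mul_sub_one, sq]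
  have hn : 2 * k.choose 2 < n := two_mul_choose_two_lt_of_le_sqrt hk1 hk
  have hk_le := le_choose_two_add_one k
  have : NeZero n := ⟨by omega⟩
  rw [hchoose]
  refine ⟨⟨by omega, fun α hα hkα => ?_⟩, fun m ⟨hkm, hm⟩ => ?_⟩
  · by_contra! hno
    have hlt := (zeroSumFree_coe.2 hno).card_add_choose_two_lt
      (by rw [ZMod.card, Multiset.coe_card]; omega)
    rw [ZMod.card, Multiset.coe_card, List.toFinset_coe] at hlt
    have := Nat.choose_le_choose 2 hkα
    omega
  · by_contra! hlt
    obtain ⟨S, hS, hkS, hz⟩ := exists_zeroSumFree_zmod (n := n) hkm (by omega)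
    induction S using Quotient.inductionOn with
    | h α =>
      obtain ⟨t, ht, ht0, hsum⟩ := hm α hS hkS
      exact zeroSumFree_coe.1 hz t ht ht0 hsum
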